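/- Let l_1, l_2, l_3, l_4 be the vertices of a regular tetrahedron inscribed in the unit sphere S^2 ⊂ E^3 (four unit vectors with ⟨l_i, l_j⟩ = −1/3 for i ≠ j), and for θ ∈ (0, π/2] let C_θ = ⋃_{j=1}^4 C[l_j, θ]. If (1/2)·arccos(−1/3) ≤ θ < arccos(1/3), then σ(C_θ) = 2(1 − cos θ) − 6·A_θ, where A_θ = (1/(2π))·( −arccos( (−1/3 − cos²θ)/sin²θ ) − 2·arccos(√2·cot θ)·cos θ + π ) and σ is the uniform probability measure on S^2. -/

import Mathlib

open Metric Real Set MeasureTheory RealInnerProductSpace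

noncomputable section

/-- The uniform (normalized rotation-invariant) probability measure `σ` on the unit
sphere `S²` in `E³`. -/
def sphereProb : Measure (sphere (0 : EuclideanSpace ℝ (Fin 3)) 1) :=
  ((volume : Measure (EuclideanSpace ℝ (Fin 3))).toSphere Set.univ)⁻¹ •
    (volume : Measure (EuclideanSpace ℝ (Fin 3))).toSphere

/-- The closed spherical cap `C[ξ, θ]` of radius `θ` centered at `ξ`, viewed as a
subset of the unit sphere. -/
def closedCap (ξ : EuclideanSpace ℝ (Fin 3)) (θ : ℝ) :
    Set (sphere (0 : EuclideanSpace ℝ (Fin 3)) 1) :=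
  {y | Real.cos θ ≤ ⟪ξ, (y : EuclideanSpace ℝ (Fin 3))⟫}

/-- The measure `A_θ` of a "lune": the intersection of two caps of radius `θ`
centered at vertices of a regular tetrahedron inscribed in the unit sphere. -/
def luneArea (θ : ℝ) : ℝ :=
  (1 / (2 * Real.pi)) *
    (-Real.arccos ((-(1 / 3) - Real.cos θ ^ 2) / Real.sin θ ^ 2) -
      2 * Real.arccos (Real.sqrt 2 * (Real.cos θ / Real.sin θ)) * Real.cos θ + Real.pi)

abbrev E3 := EuclideanSpace ℝ (Fin 3)

lemma lintegral_sph (f : ℝ × ℝ × ℝ → ENNReal) (hf : Measurable f) :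
    ∫⁻ q, f q = ∫⁻ φ in Ioo (-π) π, ∫⁻ α in Ioo (-π) π, ∫⁻ r in Ioi (0:ℝ),
      ENNReal.ofReal r * (ENNReal.ofReal (r * sin α) *
        f (r * cos α, (r * sin α * cos φ, r * sin α * sin φ))) := by
  have e1 : ∫⁻ q, f q = ∫⁻ z : ℝ, ∫⁻ φ in Ioo (-π) π, ∫⁻ ρ in Ioi (0:ℝ),
      ENNReal.ofReal ρ * f (z, (ρ * cos φ, ρ * sin φ)) := by
    rw [Measure.volume_eq_prod, lintegral_prod _ hf.aemeasurable]
    refine lintegral_congr fun z => ?_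
    rw [← lintegral_comp_polarCoord_symm]
    change ∫⁻ p in (Ioi (0:ℝ) ×ˢ Ioo (-π) π), ENNReal.ofReal p.1 * f (z, (p.1 * cos p.2, p.1 * sin p.2)) = _
    rw [Measure.volume_eq_prod, ← Measure.prod_restrict, lintegral_prod_symm]
    exact Measurable.aemeasurable (by fun_prop)
  rw [e1, lintegral_lintegral_swap]
  swap
  · refine Measurable.aemeasurable ?_
    simp only [Function.uncurry_def]
    apply Measurable.lintegral_prod_right'
      (f := fun p : (ℝ × ℝ) × ℝ => ENNReal.ofReal p.2 * f (p.1.1, (p.2 * cos p.1.2, p.2 * sin p.1.2)))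
    fun_prop
  refine lintegral_congr fun φ => ?_
  have e2 : ∀ z : ℝ, ∫⁻ ρ in Ioi (0:ℝ), ENNReal.ofReal ρ * f (z, (ρ * cos φ, ρ * sin φ)) =
      ∫⁻ ρ, ENNReal.ofReal ρ * f (z, (ρ * cos φ, ρ * sin φ)) := by
    intro z
    apply setLIntegral_eq_of_support_subset
    intro x hx
    by_contra h
    apply hx
    simp only [mem_Ioi, not_lt] at h
    simp [ENNReal.ofReal_of_nonpos h]
  simp_rw [e2]
  rw [← lintegral_prod (fun p : ℝ × ℝ => ENNReal.ofReal p.2 * f (p.1, (p.2 * cos φ, p.2 * sin φ)))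
    (Measurable.aemeasurable (by fun_prop)), ← Measure.volume_eq_prod, ← lintegral_comp_polarCoord_symm]
  change ∫⁻ p in (Ioi (0:ℝ) ×ˢ Ioo (-π) π), ENNReal.ofReal p.1 * (ENNReal.ofReal (p.1 * sin p.2) *
    f (p.1 * cos p.2, (p.1 * sin p.2 * cos φ, p.1 * sin p.2 * sin φ))) = _
  rw [Measure.volume_eq_prod, ← Measure.prod_restrict, lintegral_prod_symm]
  exact Measurable.aemeasurable (by fun_prop)

def nsq (q : ℝ × ℝ × ℝ) : ℝ := √(q.1 ^ 2 + q.2.1 ^ 2 + q.2.2 ^ 2)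

def coneSet (P : Set (ℝ × ℝ × ℝ)) : Set (ℝ × ℝ × ℝ) :=
  {q | 0 < nsq q ∧ nsq q < 1 ∧ (q.1 / nsq q, (q.2.1 / nsq q, q.2.2 / nsq q)) ∈ P}

lemma measurable_nsq : Measurable nsq := by unfold nsq; fun_prop

lemma measurableSet_coneSet {P : Set (ℝ × ℝ × ℝ)} (hP : MeasurableSet P) :
    MeasurableSet (coneSet P) := by
  have := measurable_nsq
  unfold coneSet
  apply MeasurableSet.inter
  · exact measurableSet_lt measurable_const this
  apply MeasurableSet.inter
  · exact measurableSet_lt this measurable_const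
  · exact (show Measurable fun q : ℝ × ℝ × ℝ => (q.1 / nsq q, (q.2.1 / nsq q, q.2.2 / nsq q)) by fun_prop) hP

lemma radial : ∫⁻ r in Ioi (0:ℝ), ENNReal.ofReal (r^2) * (Iio 1).indicator 1 r = ENNReal.ofReal (1/3) := by
  have : ∀ r : ℝ, ENNReal.ofReal (r^2) * (Iio 1).indicator 1 r =
    (Iio (1:ℝ)).indicator (fun r => ENNReal.ofReal (r^2)) r := by
    intro r; by_cases h : r ∈ Iio (1:ℝ) <;> simp [h]
  simp_rw [this]
  rw [lintegral_indicator measurableSet_Iio, Measure.restrict_restrict measurableSet_Iio, inter_comm,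
    Ioi_inter_Iio, restrict_Ioo_eq_restrict_Ioc, ← ofReal_integral_eq_lintegral_ofReal,
    ← intervalIntegral.integral_of_le zero_le_one]
  · congr 1; simp; norm_num
  · apply Continuous.integrableOn_Ioc; fun_prop
  · filter_upwards with r using by positivity

lemma volume_coneSet {P : Set (ℝ × ℝ × ℝ)} (hP : MeasurableSet P) :
    volume (coneSet P) = ENNReal.ofReal (1/3) * ∫⁻ α in Ioo (-π) π, ENNReal.ofReal (sin α) *
      volume {φ | φ ∈ Ioo (-π) π ∧ (cos α, (sin α * cos φ, sin α * sin φ)) ∈ P} := by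
  have hP1 : Measurable (P.indicator (1 : ℝ × ℝ × ℝ → ENNReal)) := measurable_one.indicator hP
  rw [← lintegral_indicator_one (measurableSet_coneSet hP), lintegral_sph _
    (measurable_one.indicator (measurableSet_coneSet hP))]
  have key : ∀ φ α : ℝ, ∫⁻ r in Ioi (0:ℝ), ENNReal.ofReal r * (ENNReal.ofReal (r * sin α) *
        (coneSet P).indicator 1 (r * cos α, (r * sin α * cos φ, r * sin α * sin φ))) =
      ENNReal.ofReal (1/3) * (ENNReal.ofReal (sin α) *
        P.indicator 1 (cos α, (sin α * cos φ, sin α * sin φ))) := by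
    intro φ α
    rw [← radial, mul_comm, ← lintegral_const_mul]
    swap
    · exact Measurable.mul (by fun_prop) (measurable_one.indicator measurableSet_Iio)
    refine setLIntegral_congr_fun measurableSet_Ioi fun r hr => ?_
    have hr : 0 < r := hr
    have hn : nsq (r * cos α, (r * sin α * cos φ, r * sin α * sin φ)) = r := by
      unfold nsq
      rw [show (r * cos α) ^ 2 + (r * sin α * cos φ) ^ 2 + (r * sin α * sin φ) ^ 2 = r ^ 2 by
        have h1 := sin_sq_add_cos_sq α
        have h2 := sin_sq_add_cos_sq φ
        linear_combination r^2 * h1 + r^2 * sin α ^2 * h2]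
      exact sqrt_sq hr.le
    have hi : (coneSet P).indicator (1 : ℝ × ℝ × ℝ → ENNReal) (r * cos α, (r * sin α * cos φ, r * sin α * sin φ)) =
        (Iio 1).indicator 1 r * P.indicator 1 (cos α, (sin α * cos φ, sin α * sin φ)) := by
      have hm : (r * cos α, (r * sin α * cos φ, r * sin α * sin φ)) ∈ coneSet P ↔
          r < 1 ∧ (cos α, (sin α * cos φ, sin α * sin φ)) ∈ P := by
        unfold coneSet
        rw [mem_ofPred_eq, hn]
        simp only [hr, true_and]
        rw [show r * cos α / r = cos α by field_simp, show r * sin α * cos φ / r = sin α * cos φ by field_simp,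
          show r * sin α * sin φ / r = sin α * sin φ by field_simp]
      by_cases h1 : r < 1 <;> by_cases h2 : (cos α, (sin α * cos φ, sin α * sin φ)) ∈ P <;>
        simp [indicator, hm, h1, h2]
    simp only [hi, ENNReal.ofReal_mul hr.le, pow_two]
    ring
  simp_rw [key]
  rw [lintegral_lintegral_swap (Measurable.aemeasurable (by simp only [Function.uncurry_def]; fun_prop))]
  rw [← lintegral_const_mul']
  swap
  · simp
  refine lintegral_congr fun α => ?_
  rw [lintegral_const_mul _ (by fun_prop), lintegral_const_mul _ (by fun_prop)]
  congr 2
  have hm : MeasurableSet ((fun φ : ℝ => (cos α, (sin α * cos φ, sin α * sin φ))) ⁻¹' P) :=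
    (show Measurable (fun φ : ℝ => (cos α, (sin α * cos φ, sin α * sin φ))) by fun_prop) hP
  have := lintegral_indicator_one (μ := volume.restrict (Ioo (-π) π)) hm
  rw [Measure.restrict_apply hm] at this
  rw [show {φ | φ ∈ Ioo (-π) π ∧ (cos α, (sin α * cos φ, sin α * sin φ)) ∈ P} =
    (fun φ : ℝ => (cos α, (sin α * cos φ, sin α * sin φ))) ⁻¹' P ∩ Ioo (-π) π by ext; simp [and_comm]]
  rw [← this]
  rfl

open scoped Pointwise in
lemma toSphere_frame (b : OrthonormalBasis (Fin 3) ℝ E3) {P : Set (ℝ × ℝ × ℝ)} (hP : MeasurableSet P) :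
    (volume : Measure E3).toSphere {y | (⟪b 0, (y : E3)⟫, (⟪b 1, (y:E3)⟫, ⟪b 2, (y:E3)⟫)) ∈ P} =
      ∫⁻ α in Ioo (-π) π, ENNReal.ofReal (sin α) *
      volume {φ | φ ∈ Ioo (-π) π ∧ (cos α, (sin α * cos φ, sin α * sin φ)) ∈ P} := by
  have hm : MeasurableSet {y : sphere (0:E3) 1 | (⟪b 0, (y : E3)⟫, (⟪b 1, (y:E3)⟫, ⟪b 2, (y:E3)⟫)) ∈ P} :=
    (show Measurable (fun y : sphere (0:E3) 1 => (⟪b 0, (y : E3)⟫, (⟪b 1, (y:E3)⟫, ⟪b 2, (y:E3)⟫))) by fun_prop) hP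
  rw [Measure.toSphere_apply' _ hm]
  have mp : MeasurePreserving (fun x : E3 => (⟪b 0, x⟫, (⟪b 1, x⟫, ⟪b 2, x⟫))) volume volume := by
    have h1 := b.measurePreserving_repr
    have h2 := PiLp.volume_preserving_ofLp (Fin 3)
    have h3 := volume_preserving_piFinSuccAbove (fun _ : Fin 3 => ℝ) 0
    have h4 := (MeasurePreserving.id (volume : Measure ℝ)).prod (volume_preserving_finTwoArrow ℝ)
    have := h4.comp (h3.comp (h2.comp h1))
    rw [← Measure.volume_eq_prod] at this
    have hfun : (fun x : E3 => (⟪b 0, x⟫, (⟪b 1, x⟫, ⟪b 2, x⟫))) = (Prod.map id MeasurableEquiv.finTwoArrow ∘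
      (MeasurableEquiv.piFinSuccAbove (fun _ : Fin 3 => ℝ) 0) ∘ WithLp.ofLp ∘ b.repr) := by
      funext x
      simp only [← OrthonormalBasis.repr_apply_apply]
      rfl
    rw [hfun]
    exact this
  have hn : ∀ x : E3, nsq (⟪b 0, x⟫, (⟪b 1, x⟫, ⟪b 2, x⟫)) = ‖x‖ := by
    intro x
    have := b.sum_sq_norm_inner_right x
    simp only [Fin.sum_univ_three, norm_eq_abs, sq_abs] at this
    unfold nsq
    simp only [this]
    simp
  have hset : (Ioo (0:ℝ) 1 • (((↑) : sphere (0:E3) 1 → E3) '' {y : sphere (0:E3) 1 | (⟪b 0, (y : E3)⟫, (⟪b 1, (y:E3)⟫, ⟪b 2, (y:E3)⟫)) ∈ P}) : Set E3) =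
      (fun x : E3 => (⟪b 0, x⟫, (⟪b 1, x⟫, ⟪b 2, x⟫))) ⁻¹' coneSet P := by
    ext x
    simp only [Set.mem_smul, mem_preimage, coneSet, mem_ofPred_eq, hn]
    constructor
    · rintro ⟨r, ⟨hr0, hr1⟩, _, ⟨y, hy, rfl⟩, rfl⟩
      have hy1 : ‖(y:E3)‖ = 1 := by simp
      have : ‖r • (y:E3)‖ = r := by rw [norm_smul, hy1, mul_one, norm_eq_abs, abs_of_pos hr0]
      rw [this]
      refine ⟨hr0, hr1, ?_⟩
      simp only [inner_smul_right]
      simpa [mul_div_cancel_left₀ _ hr0.ne'] using hy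
    · rintro ⟨h0, h1, h2⟩
      refine ⟨‖x‖, ⟨h0, h1⟩, ‖x‖⁻¹ • x, ⟨⟨‖x‖⁻¹ • x, ?_⟩, ?_, rfl⟩, ?_⟩
      · simp [norm_smul, h0.ne']
      · simp only [mem_ofPred_eq, inner_smul_right]
        simpa [div_eq_inv_mul] using h2
      · rw [smul_smul, mul_inv_cancel₀ h0.ne', one_smul]
  rw [hset, mp.measure_preimage (measurableSet_coneSet hP).nullMeasurableSet, volume_coneSet hP, ← mul_assoc]
  have : ((Module.finrank ℝ E3 : ℕ) : ENNReal) * ENNReal.ofReal (1/3) = 1 := by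
    rw [show Module.finrank ℝ E3 = 3 by simp]
    rw [← ENNReal.ofReal_natCast, ← ENNReal.ofReal_mul (by positivity)]
    norm_num
  rw [this, one_mul]

lemma vol_arc {t : ℝ} (ht : 0 ≤ t) :
    volume {φ : ℝ | φ ∈ Ioo (-π) π ∧ t ≤ cos φ} = ENNReal.ofReal (2 * arccos t) := by
  have hpi := pi_pos
  by_cases h1 : 1 < t
  · have : {φ : ℝ | φ ∈ Ioo (-π) π ∧ t ≤ cos φ} = ∅ := by
      ext φ; simp only [mem_ofPred_eq, mem_empty_iff_false, iff_false]
      rintro ⟨_, h⟩; linarith [cos_le_one φ]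
    rw [this, arccos_of_one_le h1.le]; simp
  push Not at h1
  have ha : arccos t ≤ π / 2 := arccos_le_pi_div_two.2 ht
  have : {φ : ℝ | φ ∈ Ioo (-π) π ∧ t ≤ cos φ} = Icc (-arccos t) (arccos t) := by
    ext φ
    simp only [mem_ofPred_eq, mem_Icc, mem_Ioo, ← abs_le]
    constructor
    · rintro ⟨h, h2⟩
      rw [← abs_lt] at h
      rw [← cos_abs] at h2
      have := arccos_le_arccos h2
      rwa [arccos_cos (abs_nonneg _) h.le] at this
    · intro h
      have hlt : |φ| < π := by linarith
      refine ⟨abs_lt.1 hlt, ?_⟩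
      rw [← cos_abs, ← cos_arccos (by linarith) h1]
      exact cos_le_cos_of_nonneg_of_le_pi (abs_nonneg _) (arccos_le_pi _) h
  rw [this, Real.volume_Icc]; congr 1; ring

lemma vol_arc' {t : ℝ} (ht : 0 ≤ t) :
    volume {φ : ℝ | φ ∈ Ioo (-π) π ∧ t < cos φ} = ENNReal.ofReal (2 * arccos t) := by
  have hpi := pi_pos
  by_cases h1 : 1 < t
  · have : {φ : ℝ | φ ∈ Ioo (-π) π ∧ t < cos φ} = ∅ := by
      ext φ; simp only [mem_ofPred_eq, mem_empty_iff_false, iff_false]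
      rintro ⟨_, h⟩; linarith [cos_le_one φ]
    rw [this, arccos_of_one_le h1.le]; simp
  push Not at h1
  have ha : arccos t ≤ π / 2 := arccos_le_pi_div_two.2 ht
  have : {φ : ℝ | φ ∈ Ioo (-π) π ∧ t < cos φ} = Ioo (-arccos t) (arccos t) := by
    ext φ
    simp only [mem_ofPred_eq, mem_Ioo, ← abs_lt]
    constructor
    · rintro ⟨h, h2⟩
      rw [← cos_abs] at h2
      have := arccos_lt_arccos (by linarith) h2 (cos_le_one _)
      rwa [arccos_cos (abs_nonneg _) h.le] at this
    · intro h
      have hlt : |φ| < π := by linarith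
      refine ⟨hlt, ?_⟩
      rw [← cos_abs, ← cos_arccos (by linarith) h1]
      exact cos_lt_cos_of_nonneg_of_le_pi (abs_nonneg _) (arccos_le_pi _) h
  rw [this, Real.volume_Ioo]; congr 1; ring

lemma cap_integral {θ : ℝ} (h0 : 0 < θ) (hp : θ ≤ π) :
    ∫⁻ α in Ioo (-π) π, ENNReal.ofReal (sin α) *
      volume {φ | φ ∈ Ioo (-π) π ∧ (cos α, (sin α * cos φ, sin α * sin φ)) ∈
        {q : ℝ × ℝ × ℝ | cos θ ≤ q.1}} = ENNReal.ofReal (2 * π * (1 - cos θ)) := by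
  have hpi := pi_pos
  have key : ∀ α ∈ Ioo (-π) π, ENNReal.ofReal (sin α) *
      volume {φ | φ ∈ Ioo (-π) π ∧ (cos α, (sin α * cos φ, sin α * sin φ)) ∈
        {q : ℝ × ℝ × ℝ | cos θ ≤ q.1}} =
      (Ioc 0 θ).indicator (fun α => ENNReal.ofReal (sin α * (2 * π))) α := by
    intro α hα
    by_cases hm : α ∈ Ioc 0 θ
    · rw [indicator_of_mem hm]
      have h1 : cos θ ≤ cos α := cos_le_cos_of_nonneg_of_le_pi hm.1.le hp hm.2
      have : {φ | φ ∈ Ioo (-π) π ∧ (cos α, (sin α * cos φ, sin α * sin φ)) ∈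
        {q : ℝ × ℝ × ℝ | cos θ ≤ q.1}} = Ioo (-π) π := by
        ext φ; simp [h1]
      rw [this, Real.volume_Ioo, ENNReal.ofReal_mul (sin_nonneg_of_nonneg_of_le_pi hm.1.le (hm.2.trans hp))]
      congr 2; ring
    · rw [indicator_of_notMem hm]
      by_cases ha : α ≤ 0
      · rw [ENNReal.ofReal_of_nonpos (sin_nonpos_of_nonpos_of_neg_pi_le ha hα.1.le), zero_mul]
      · have h2 : θ < α := by
          by_contra h; exact hm ⟨not_le.1 ha, not_lt.1 h⟩
        have h1 : cos α < cos θ := cos_lt_cos_of_nonneg_of_le_pi h0.le hα.2.le h2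
        have : {φ | φ ∈ Ioo (-π) π ∧ (cos α, (sin α * cos φ, sin α * sin φ)) ∈
          {q : ℝ × ℝ × ℝ | cos θ ≤ q.1}} = ∅ := by
          ext φ; simp [h1]
        rw [this]; simp
  rw [setLIntegral_congr_fun measurableSet_Ioo key, lintegral_indicator measurableSet_Ioc,
    Measure.restrict_restrict measurableSet_Ioc]
  have hae : (Ioc 0 θ ∩ Ioo (-π) π : Set ℝ) =ᵐ[volume] Ioc 0 θ := by
    have h1 : (Ioc 0 θ ∩ Ioo (-π) π : Set ℝ) =ᵐ[volume] (Ioc 0 θ ∩ Ioc (-π) π : Set ℝ) :=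
      (Filter.EventuallyEq.refl _ _).inter Ioo_ae_eq_Ioc
    rwa [inter_eq_left.2 (show Ioc 0 θ ⊆ Ioc (-π) π from Ioc_subset_Ioc (by linarith) hp)] at h1
  rw [Measure.restrict_congr_set hae, ← ofReal_integral_eq_lintegral_ofReal,
    ← intervalIntegral.integral_of_le h0.le]
  · congr 1; simp; ring
  · apply Continuous.integrableOn_Ioc; fun_prop
  · filter_upwards [ae_restrict_mem measurableSet_Ioc] with α hm
    have := sin_nonneg_of_nonneg_of_le_pi hm.1.le (hm.2.trans hp)
    simp only [Pi.zero_apply]; positivity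

/-- area of half of a lune -/
def halfLune (θ : ℝ) : ℝ :=
  2 * arctan (√(1 - 3 * cos θ ^ 2) / √2) - 2 * cos θ * arccos (√2 * (cos θ / sin θ))

lemma halfLune_hasDerivAt {α : ℝ} (h0 : 0 < sin α) (h1 : cos α ^ 2 < 1 / 3) :
    HasDerivAt halfLune (sin α * (2 * arccos (√2 * (cos α / sin α)))) α := by
  have hu : 0 < 1 - 3 * cos α ^ 2 := by linarith
  have hsc := sin_sq_add_cos_sq α
  set u := √(1 - 3 * cos α ^ 2) with hu_def
  have hupos : 0 < u := sqrt_pos.2 hu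
  have hu2 : u ^ 2 = 1 - 3 * cos α ^ 2 := sq_sqrt hu.le
  have h2 : √2 ^ 2 = (2:ℝ) := sq_sqrt (by norm_num)
  have h2pos : 0 < √(2:ℝ) := by positivity
  have hone : 1 - (√2 * (cos α / sin α)) ^ 2 = (u / sin α) ^ 2 := by
    rw [mul_pow, div_pow, div_pow, h2, hu2]; field_simp; linarith
  have hpos : 0 < 1 - (√2 * (cos α / sin α)) ^ 2 := by rw [hone]; positivity
  have habs := abs_lt.1 ((sq_lt_one_iff_abs_lt_one _).1 (by linarith : (√2 * (cos α / sin α)) ^ 2 < 1))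
  have d1 : HasDerivAt (fun α => √2 * (cos α / sin α))
      (√2 * ((-sin α * sin α - cos α * cos α) / sin α ^ 2)) α :=
    ((hasDerivAt_cos α).div (hasDerivAt_sin α) h0.ne').const_mul _
  have d2 := (hasDerivAt_arccos habs.1.ne' habs.2.ne).comp α d1
  have d3 : HasDerivAt (fun α => 1 - 3 * cos α ^ 2) (6 * cos α * sin α) α := by
    have := (((hasDerivAt_cos α).pow 2).const_mul 3).const_sub 1
    refine this.congr_deriv ?_
    push_cast; ring
  have d4 := ((d3.sqrt hu.ne').div_const √2).arctan
  have d5 := (d4.const_mul 2).sub (((hasDerivAt_cos α).const_mul 2).mul d2)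
  unfold halfLune
  refine d5.congr_deriv ?_
  rw [hone, sqrt_sq (by positivity), ← hu_def, div_pow, hu2, h2]
  simp only [Function.comp_apply]
  have e1 : -sin α * sin α - cos α * cos α = -1 := by linarith
  have e2 : 1 + (1 - 3 * cos α ^ 2) / 2 = 3 * sin α ^ 2 / 2 := by linarith
  rw [e1, e2]
  field_simp
  linear_combination (-3 * cos α) * h2

lemma halfLune_integral {θ : ℝ} (h0 : 0 < θ) (hp : θ ≤ π / 2) (hc : cos θ ^ 2 ≤ 1 / 3)
    (Q : Set (ℝ × ℝ × ℝ))
    (hQ : ∀ α ∈ Ioc 0 θ, volume {φ | φ ∈ Ioo (-π) π ∧ (cos α, (sin α * cos φ, sin α * sin φ)) ∈ Q} =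
      ENNReal.ofReal (2 * arccos (√2 * (cos α / sin α))))
    (hQ' : ∀ q ∈ Q, cos θ ≤ q.1) :
    0 ≤ halfLune θ ∧ ∫⁻ α in Ioo (-π) π, ENNReal.ofReal (sin α) *
      volume {φ | φ ∈ Ioo (-π) π ∧ (cos α, (sin α * cos φ, sin α * sin φ)) ∈ Q} =
        ENNReal.ofReal (halfLune θ) := by
  have hpi := pi_pos
  have h3 : 0 < √(3:ℝ) := by positivity
  have h3s : √3 ^ 2 = (3:ℝ) := sq_sqrt (by norm_num)
  set α0 := arccos (1 / √3) with hα0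
  have h13 : 1 / √3 ≤ (1:ℝ) := by
    rw [div_le_one h3]; nlinarith
  have h13' : 1 / √3 < (1:ℝ) := by
    rw [div_lt_one h3]; nlinarith
  have hcos0 : cos α0 = 1 / √3 := cos_arccos (by linarith [show 0 < 1 / √(3:ℝ) by positivity]) h13
  have hcos0s : cos α0 ^ 2 = 1 / 3 := by rw [hcos0, div_pow, h3s]; norm_num
  have hα0pos : 0 < α0 := arccos_pos.2 h13'
  have hcθ : 0 ≤ cos θ := cos_nonneg_of_neg_pi_div_two_le_of_le (by linarith) hp
  have hα0θ : α0 ≤ θ := by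
    rw [← arccos_cos h0.le (by linarith)]
    apply arccos_le_arccos
    rw [← hcos0]
    refine abs_le_of_sq_le_sq' (by linarith) ?_ |>.2
    rw [hcos0]; positivity
  have key : ∀ α ∈ Ioo (-π) π, ENNReal.ofReal (sin α) *
      volume {φ | φ ∈ Ioo (-π) π ∧ (cos α, (sin α * cos φ, sin α * sin φ)) ∈ Q} =
      (Ioc α0 θ).indicator (fun α => ENNReal.ofReal (sin α * (2 * arccos (√2 * (cos α / sin α))))) α := by
    intro α hα
    by_cases ha : α ≤ 0
    · rw [ENNReal.ofReal_of_nonpos (sin_nonpos_of_nonpos_of_neg_pi_le ha hα.1.le), zero_mul,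
        indicator_of_notMem]
      intro h; linarith [h.1]
    push Not at ha
    have hs : 0 < sin α := sin_pos_of_pos_of_lt_pi ha hα.2
    by_cases hm : α ≤ θ
    · rw [hQ α ⟨ha, hm⟩, ← ENNReal.ofReal_mul hs.le]
      by_cases hm2 : α0 < α
      · rw [indicator_of_mem (show α ∈ Ioc α0 θ from ⟨hm2, hm⟩)]
      · rw [indicator_of_notMem (fun h => hm2 h.1)]
        push Not at hm2
        have hca : cos α0 ≤ cos α := cos_le_cos_of_nonneg_of_le_pi ha.le (arccos_le_pi _) hm2
        have : 1 ≤ √2 * (cos α / sin α) := by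
          rw [← mul_div_assoc, le_div_iff₀ hs, one_mul]
          have hc0 : 0 < cos α0 := by rw [hcos0]; positivity
          have h2 : √2 ^ 2 = (2:ℝ) := sq_sqrt (by norm_num)
          have hc1 : 0 < cos α := by linarith
          refine abs_le_of_sq_le_sq' ?_ (by positivity) |>.2
          rw [mul_pow, h2, sin_sq]
          nlinarith
        rw [arccos_of_one_le this]; simp
    · rw [indicator_of_notMem (fun h => hm h.2)]
      push Not at hm
      have h1 : cos α < cos θ := cos_lt_cos_of_nonneg_of_le_pi h0.le hα.2.le hm
      have : {φ | φ ∈ Ioo (-π) π ∧ (cos α, (sin α * cos φ, sin α * sin φ)) ∈ Q} = ∅ := by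
        ext φ; simp only [mem_ofPred_eq, mem_empty_iff_false, iff_false]
        rintro ⟨_, h⟩
        have := hQ' _ h
        simp only at this
        linarith
      rw [this]; simp
  have hsin : ∀ α ∈ Icc α0 θ, 0 < sin α := fun α h =>
    sin_pos_of_pos_of_lt_pi (by linarith [h.1]) (by linarith [h.2])
  have hcont : ContinuousOn (fun α => √2 * (cos α / sin α)) (Icc α0 θ) :=
    continuousOn_const.mul (continuous_cos.continuousOn.div continuous_sin.continuousOn
      fun x hx => (hsin x hx).ne')
  have hcont1 := continuous_arccos.comp_continuousOn hcont
  have hcont2 : ContinuousOn (fun α => sin α * (2 * arccos (√2 * (cos α / sin α)))) (Icc α0 θ) :=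
    continuous_sin.continuousOn.mul (continuousOn_const.mul hcont1)
  have hI : ∫ α in α0..θ, sin α * (2 * arccos (√2 * (cos α / sin α))) = halfLune θ := by
    rw [intervalIntegral.integral_eq_sub_of_hasDerivAt_of_le (f := halfLune) hα0θ]
    · have : halfLune α0 = 0 := by
        have hs0 : sin α0 = √2 * cos α0 := by
          have h2 : √2 ^ 2 = (2:ℝ) := sq_sqrt (by norm_num)
          have hc0 : 0 < cos α0 := by rw [hcos0]; positivity
          refine (sq_eq_sq₀ (hsin α0 ⟨le_rfl, hα0θ⟩).le (by positivity)).1 ?_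
          rw [mul_pow, h2, sin_sq, hcos0s]; norm_num
        have : √2 * (cos α0 / sin α0) = 1 := by
          have hc0 : 0 < cos α0 := by rw [hcos0]; positivity
          rw [hs0]; field_simp
        unfold halfLune
        rw [this, hcos0s]; norm_num
      rw [this, sub_zero]
    · unfold halfLune
      exact (Continuous.continuousOn (by fun_prop)).sub ((Continuous.continuousOn (by fun_prop)).mul hcont1)
    · intro x hx
      refine halfLune_hasDerivAt (hsin x ⟨hx.1.le, hx.2.le⟩) ?_
      have h1 : cos x < cos α0 := cos_lt_cos_of_nonneg_of_le_pi hα0pos.le (by linarith [hx.2]) hx.1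
      have h2 : 0 ≤ cos x := cos_nonneg_of_neg_pi_div_two_le_of_le (by linarith [hx.1]) (by linarith [hx.2])
      nlinarith
    · exact hcont2.intervalIntegrable_of_Icc hα0θ
  refine ⟨?_, ?_⟩
  · rw [← hI]
    refine intervalIntegral.integral_nonneg hα0θ fun α hm => ?_
    have := hsin α hm
    have := arccos_nonneg (√2 * (cos α / sin α))
    positivity
  rw [setLIntegral_congr_fun measurableSet_Ioo key, lintegral_indicator measurableSet_Ioc,
    Measure.restrict_restrict measurableSet_Ioc,
    inter_eq_left.2 (show Ioc α0 θ ⊆ Ioo (-π) π from fun x hx => ⟨by linarith [hx.1], by linarith [hx.2]⟩)]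
  rw [← hI, intervalIntegral.integral_of_le hα0θ, ofReal_integral_eq_lintegral_ofReal]
  · exact hcont2.integrableOn_Icc.mono_set Ioc_subset_Icc_self
  · filter_upwards [ae_restrict_mem measurableSet_Ioc] with α hm
    have := hsin α ⟨hm.1.le, hm.2⟩
    have := arccos_nonneg (√2 * (cos α / sin α))
    simp only [Pi.zero_apply]; positivity

lemma exists_frame1 (a : E3) (ha : ‖a‖ = 1) :
    ∃ b : OrthonormalBasis (Fin 3) ℝ E3, b 0 = a := by
  have h : Orthonormal ℝ (({0} : Set (Fin 3)).domRestrict (fun _ : Fin 3 => a)) := by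
    refine ⟨fun _ => ha, ?_⟩
    rintro ⟨i, hi⟩ ⟨j, hj⟩ hij
    simp only [mem_singleton_iff] at hi hj
    subst hi; subst hj; exact absurd rfl hij
  obtain ⟨b, hb⟩ := h.exists_orthonormalBasis_extension_of_card_eq (by simp)
  exact ⟨b, hb 0 (by simp)⟩

lemma exists_frame2 (a e : E3) (ha : ‖a‖ = 1) (he : ‖e‖ = 1) (hae : ⟪a, e⟫ = 0) :
    ∃ b : OrthonormalBasis (Fin 3) ℝ E3, b 0 = a ∧ b 1 = e := by
  have h : Orthonormal ℝ (({0, 1} : Set (Fin 3)).domRestrict (![a, e, 0] : Fin 3 → E3)) := by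
    constructor
    · rintro ⟨i, hi⟩
      rcases hi with rfl | rfl
      · exact ha
      · exact he
    · rintro ⟨i, hi⟩ ⟨j, hj⟩ hij
      have hea : ⟪e, a⟫ = 0 := by rw [real_inner_comm]; exact hae
      rcases hi with rfl | rfl <;> rcases hj with rfl | rfl
      · exact absurd rfl hij
      · exact hae
      · exact hea
      · exact absurd rfl hij
  obtain ⟨b, hb⟩ := h.exists_orthonormalBasis_extension_of_card_eq (by simp)
  exact ⟨b, hb 0 (by simp), hb 1 (by simp)⟩

lemma toSphere_cap (a : E3) (ha : ‖a‖ = 1) {θ : ℝ} (h0 : 0 < θ) (hp : θ ≤ π) :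
    (volume : Measure E3).toSphere (closedCap a θ) = ENNReal.ofReal (2 * π * (1 - cos θ)) := by
  obtain ⟨b, hb⟩ := exists_frame1 a ha
  rw [← cap_integral h0 hp, ← toSphere_frame b (measurableSet_le measurable_const measurable_fst)]
  subst hb
  rfl

lemma toSphere_univ : (volume : Measure E3).toSphere univ = ENNReal.ofReal (4 * π) := by
  have h1 : ‖(EuclideanSpace.single 0 1 : E3)‖ = 1 := by simp
  have := toSphere_cap _ h1 pi_pos le_rfl
  rw [cos_pi] at this
  rw [show (4 * π) = 2 * π * (1 - -1) by ring, ← this]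
  congr 1
  ext y
  simp only [mem_univ, closedCap, mem_ofPred_eq, true_iff, cos_pi]
  have hy : ‖(y : E3)‖ = 1 := by simp
  have := abs_le.1 (abs_real_inner_le_norm (EuclideanSpace.single 0 1 : E3) (y : E3))
  rw [h1, hy] at this
  linarith [this.1]

lemma frame_pair (a a' : E3) (ha : ‖a‖ = 1) (ha' : ‖a'‖ = 1) (haa : ⟪a, a'⟫ = -(1 / 3)) :
    ∃ b : OrthonormalBasis (Fin 3) ℝ E3, b 0 = a ∧
      ∀ y : E3, ⟪a', y⟫ = 2 * √2 / 3 * ⟪b 1, y⟫ - 1 / 3 * ⟪b 0, y⟫ := by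
  have h2 : √2 ^ 2 = (2:ℝ) := sq_sqrt (by norm_num)
  have h2pos : 0 < √(2:ℝ) := by positivity
  have haa' : ⟪a', a⟫ = -(1 / 3) := by rw [real_inner_comm]; exact haa
  have e1 : ⟪a, a⟫ = 1 := by rw [real_inner_self_eq_norm_sq, ha]; norm_num
  have e2 : ⟪a', a'⟫ = 1 := by rw [real_inner_self_eq_norm_sq, ha']; norm_num
  have hn : ‖(3 / (2 * √2)) • (a' + (1 / 3 : ℝ) • a)‖ = 1 := by
    rw [← sq_eq_sq₀ (norm_nonneg _) zero_le_one, ← real_inner_self_eq_norm_sq]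
    simp only [inner_smul_left, inner_add_left, inner_smul_right, inner_add_right, conj_trivial,
      e1, e2, haa, haa']
    field_simp
    rw [h2]; norm_num
  have ho : ⟪a, (3 / (2 * √2)) • (a' + (1 / 3 : ℝ) • a)⟫ = 0 := by
    simp only [inner_smul_right, inner_add_right, e1, haa]
    norm_num
  obtain ⟨b, hb0, hb1⟩ := exists_frame2 a _ ha hn ho
  refine ⟨b, hb0, fun y => ?_⟩
  rw [hb0, hb1]
  simp only [inner_smul_left, inner_add_left, conj_trivial]
  field_simp
  ring

lemma half1 (a a' : E3) (ha : ‖a‖ = 1) (ha' : ‖a'‖ = 1) (haa : ⟪a, a'⟫ = -(1 / 3)) {θ : ℝ}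
    (h0 : 0 < θ) (hp : θ ≤ π / 2) (hc : cos θ ^ 2 ≤ 1 / 3) :
    (volume : Measure E3).toSphere {y | cos θ ≤ ⟪a, (y : E3)⟫ ∧ ⟪a, (y : E3)⟫ ≤ ⟪a', (y : E3)⟫} =
      ENNReal.ofReal (halfLune θ) ∧ 0 ≤ halfLune θ := by
  have hpi := pi_pos
  have h2 : √2 ^ 2 = (2:ℝ) := sq_sqrt (by norm_num)
  have h2pos : 0 < √(2:ℝ) := by positivity
  obtain ⟨b, hb, hb'⟩ := frame_pair a a' ha ha' haa
  have hP : MeasurableSet {q : ℝ × ℝ × ℝ | cos θ ≤ q.1 ∧ √2 * q.1 ≤ q.2.1} :=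
    (show MeasurableSet {q : ℝ × ℝ × ℝ | cos θ ≤ q.1} from
      measurableSet_le measurable_const measurable_fst).inter
      (show MeasurableSet {q : ℝ × ℝ × ℝ | √2 * q.1 ≤ q.2.1} from
        measurableSet_le (by fun_prop) (by fun_prop))
  have hI := halfLune_integral h0 hp hc {q : ℝ × ℝ × ℝ | cos θ ≤ q.1 ∧ √2 * q.1 ≤ q.2.1} ?_
    (fun q hq => hq.1)
  · refine ⟨?_, hI.1⟩
    rw [← hI.2, ← toSphere_frame b hP]
    congr 1
    ext y
    simp only [mem_ofPred_eq, hb', hb]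
    refine and_congr_right fun _ => ?_
    have hk : 2 * √2 / 3 * ⟪b 1, (y : E3)⟫ - 1 / 3 * ⟪a, (y : E3)⟫ - ⟪a, (y : E3)⟫ =
        2 * √2 / 3 * (⟪b 1, (y : E3)⟫ - √2 * ⟪a, (y : E3)⟫) := by
      linear_combination (2 / 3 * ⟪a, (y : E3)⟫) * h2
    rw [← sub_nonneg, hk, mul_nonneg_iff_of_pos_left (by positivity), sub_nonneg]
  · intro α hα
    have hs : 0 < sin α := sin_pos_of_pos_of_lt_pi hα.1 (by linarith [hα.2])
    have hcα : cos θ ≤ cos α := cos_le_cos_of_nonneg_of_le_pi hα.1.le (by linarith) hα.2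
    have hcα0 : 0 ≤ cos α := cos_nonneg_of_neg_pi_div_two_le_of_le (by linarith [hα.1]) (by linarith [hα.2])
    rw [← vol_arc (by positivity)]
    congr 1
    ext φ
    simp only [mem_ofPred_eq, hcα, true_and]
    refine and_congr_right fun _ => ?_
    rw [← mul_div_assoc, div_le_iff₀ hs, mul_comm (cos φ)]

lemma half2 (a a' : E3) (ha : ‖a‖ = 1) (ha' : ‖a'‖ = 1) (haa : ⟪a, a'⟫ = -(1 / 3)) {θ : ℝ}
    (h0 : 0 < θ) (hp : θ ≤ π / 2) (hc : cos θ ^ 2 ≤ 1 / 3) :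
    (volume : Measure E3).toSphere {y | cos θ ≤ ⟪a, (y : E3)⟫ ∧ ⟪a, (y : E3)⟫ < ⟪a', (y : E3)⟫} =
      ENNReal.ofReal (halfLune θ) ∧ 0 ≤ halfLune θ := by
  have hpi := pi_pos
  have h2 : √2 ^ 2 = (2:ℝ) := sq_sqrt (by norm_num)
  have h2pos : 0 < √(2:ℝ) := by positivity
  obtain ⟨b, hb, hb'⟩ := frame_pair a a' ha ha' haa
  have hP : MeasurableSet {q : ℝ × ℝ × ℝ | cos θ ≤ q.1 ∧ √2 * q.1 < q.2.1} :=
    (show MeasurableSet {q : ℝ × ℝ × ℝ | cos θ ≤ q.1} from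
      measurableSet_le measurable_const measurable_fst).inter
      (show MeasurableSet {q : ℝ × ℝ × ℝ | √2 * q.1 < q.2.1} from
        measurableSet_lt (by fun_prop) (by fun_prop))
  have hI := halfLune_integral h0 hp hc {q : ℝ × ℝ × ℝ | cos θ ≤ q.1 ∧ √2 * q.1 < q.2.1} ?_
    (fun q hq => hq.1)
  · refine ⟨?_, hI.1⟩
    rw [← hI.2, ← toSphere_frame b hP]
    congr 1
    ext y
    simp only [mem_ofPred_eq, hb', hb]
    refine and_congr_right fun _ => ?_
    have hk : 2 * √2 / 3 * ⟪b 1, (y : E3)⟫ - 1 / 3 * ⟪a, (y : E3)⟫ - ⟪a, (y : E3)⟫ =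
        2 * √2 / 3 * (⟪b 1, (y : E3)⟫ - √2 * ⟪a, (y : E3)⟫) := by
      linear_combination (2 / 3 * ⟪a, (y : E3)⟫) * h2
    rw [← sub_pos, hk, mul_pos_iff_of_pos_left (by positivity), sub_pos]
  · intro α hα
    have hs : 0 < sin α := sin_pos_of_pos_of_lt_pi hα.1 (by linarith [hα.2])
    have hcα : cos θ ≤ cos α := cos_le_cos_of_nonneg_of_le_pi hα.1.le (by linarith) hα.2
    have hcα0 : 0 ≤ cos α := cos_nonneg_of_neg_pi_div_two_le_of_le (by linarith [hα.1]) (by linarith [hα.2])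
    rw [← vol_arc' (by positivity)]
    congr 1
    ext φ
    simp only [mem_ofPred_eq, hcα, true_and]
    refine and_congr_right fun _ => ?_
    rw [← mul_div_assoc, div_lt_iff₀ hs, mul_comm (cos φ)]

lemma halfLune_eq {θ : ℝ} (h0 : 0 < θ) (hp : θ ≤ π / 2) (hc : cos θ ^ 2 ≤ 1 / 3) :
    2 * halfLune θ = 4 * π * luneArea θ := by
  have hpi := pi_pos
  have h2 : √2 ^ 2 = (2:ℝ) := sq_sqrt (by norm_num)
  have h2pos : 0 < √(2:ℝ) := by positivity
  have key : arccos ((-(1 / 3) - cos θ ^ 2) / sin θ ^ 2) = π - 2 * arctan (√(1 - 3 * cos θ ^ 2) / √2) := by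
    set t := √(1 - 3 * cos θ ^ 2) / √2 with ht
    have ht2 : t ^ 2 = (1 - 3 * cos θ ^ 2) / 2 := by rw [ht, div_pow, h2, sq_sqrt (by linarith)]
    have ht0 : 0 ≤ arctan t := arctan_nonneg.2 (by positivity)
    have ht1 := arctan_lt_pi_div_two t
    rw [show (-(1 / 3) - cos θ ^ 2) / sin θ ^ 2 = -((1 / 3 + cos θ ^ 2) / sin θ ^ 2) by ring,
      arccos_neg, show (1 / 3 + cos θ ^ 2) / sin θ ^ 2 = cos (2 * arctan t) by
        rw [cos_two_mul, cos_sq_arctan, ht2, sin_sq]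
        have : 1 - cos θ ^ 2 ≠ 0 := by nlinarith
        rw [show 1 + (1 - 3 * cos θ ^ 2) / 2 = 3 / 2 * (1 - cos θ ^ 2) by ring]
        field_simp
        ring, arccos_cos (by linarith) (by linarith)]
  unfold luneArea
  rw [key]
  unfold halfLune
  field_simp
  ring

lemma toSphere_lune (a a' : E3) (ha : ‖a‖ = 1) (ha' : ‖a'‖ = 1) (haa : ⟪a, a'⟫ = -(1 / 3)) {θ : ℝ}
    (h0 : 0 < θ) (hp : θ ≤ π / 2) (hc : cos θ ^ 2 ≤ 1 / 3) :
    (volume : Measure E3).toSphere (closedCap a θ ∩ closedCap a' θ) =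
      ENNReal.ofReal (4 * π * luneArea θ) ∧ 0 ≤ luneArea θ := by
  have hpi := pi_pos
  have hh := (half1 a a' ha ha' haa h0 hp hc).2
  have hl0 : 0 ≤ luneArea θ := by
    have := halfLune_eq h0 hp hc
    by_contra h
    push Not at h
    nlinarith
  refine ⟨?_, hl0⟩
  have haa' : ⟪a', a⟫ = -(1 / 3) := by rw [real_inner_comm]; exact haa
  have hset : closedCap a θ ∩ closedCap a' θ =
      {y : sphere (0:E3) 1 | cos θ ≤ ⟪a, (y : E3)⟫ ∧ ⟪a, (y : E3)⟫ ≤ ⟪a', (y : E3)⟫} ∪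
      {y : sphere (0:E3) 1 | cos θ ≤ ⟪a', (y : E3)⟫ ∧ ⟪a', (y : E3)⟫ < ⟪a, (y : E3)⟫} := by
    ext y
    simp only [closedCap, mem_inter_iff, mem_union, mem_ofPred_eq]
    constructor
    · rintro ⟨h1, h2⟩
      rcases le_or_gt ⟪a, (y : E3)⟫ ⟪a', (y : E3)⟫ with h | h
      · exact Or.inl ⟨h1, h⟩
      · exact Or.inr ⟨h2, h⟩
    · rintro (⟨h1, h2⟩ | ⟨h1, h2⟩)
      · exact ⟨h1, h1.trans h2⟩
      · exact ⟨h1.trans h2.le, h1⟩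
  rw [hset, measure_union, (half1 a a' ha ha' haa h0 hp hc).1, (half2 a' a ha' ha haa' h0 hp hc).1,
    ← ENNReal.ofReal_add (half1 a a' ha ha' haa h0 hp hc).2 (half1 a a' ha ha' haa h0 hp hc).2, ← halfLune_eq h0 hp hc, two_mul]
  · rw [Set.disjoint_left]
    rintro y ⟨_, h1⟩ ⟨_, h2⟩
    linarith
  · exact (show MeasurableSet {y : sphere (0:E3) 1 | cos θ ≤ ⟪a', (y : E3)⟫} from
        measurableSet_le (by fun_prop) (by fun_prop)).inter
      (show MeasurableSet {y : sphere (0:E3) 1 | ⟪a', (y : E3)⟫ < ⟪a, (y : E3)⟫} from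
        measurableSet_lt (by fun_prop) (by fun_prop))

lemma measurableSet_cap (a : E3) (θ : ℝ) : MeasurableSet (closedCap a θ) :=
  measurableSet_le (by fun_prop) (by fun_prop)

lemma union_four {X : Type*} [MeasurableSpace X] (μ : Measure X) [IsFiniteMeasure μ]
    (A : Fin 4 → Set X) (hA : ∀ i, MeasurableSet (A i))
    (hd : ∀ i j k, i ≠ j → j ≠ k → i ≠ k → A i ∩ A j ∩ A k = ∅)
    (p q : ℝ) (hp : ∀ i, μ.real (A i) = p) (hq : ∀ i j, i ≠ j → μ.real (A i ∩ A j) = q) :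
    μ.real (⋃ i, A i) = 4 * p - 6 * q := by
  have hU : (⋃ i, A i) = ((A 0 ∪ A 1) ∪ A 2) ∪ A 3 := by
    ext x; simp [Fin.exists_fin_succ, or_assoc]
  have hdis : ∀ i j k, i ≠ j → j ≠ k → i ≠ k → Disjoint (A i ∩ A k) (A j ∩ A k) := by
    intro i j k h1 h2 h3
    rw [Set.disjoint_iff_inter_eq_empty, ← hd i j k h1 h2 h3]
    ext x; simp only [mem_inter_iff]; tauto
  have e1 := measureReal_union_add_inter (μ := μ) (s := A 0) (hA 1)
  have e2 := measureReal_union_add_inter (μ := μ) (s := A 0 ∪ A 1) (hA 2)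
  have e3 := measureReal_union_add_inter (μ := μ) (s := A 0 ∪ A 1 ∪ A 2) (hA 3)
  rw [union_inter_distrib_right, measureReal_union (hdis 0 1 2 (by decide) (by decide) (by decide))
    ((hA 1).inter (hA 2)), hq 0 2 (by decide), hq 1 2 (by decide), hp 2] at e2
  rw [union_inter_distrib_right, union_inter_distrib_right, measureReal_union _ ((hA 2).inter (hA 3)),
    measureReal_union (hdis 0 1 3 (by decide) (by decide) (by decide))
    ((hA 1).inter (hA 3)), hq 0 3 (by decide), hq 1 3 (by decide), hq 2 3 (by decide), hp 3] at e3
  · rw [hp, hp, hq 0 1 (by decide)] at e1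
    rw [hU]; linarith
  · exact Disjoint.union_left (hdis 0 2 3 (by decide) (by decide) (by decide))
      (hdis 1 2 3 (by decide) (by decide) (by decide))

lemma no_triple (l : Fin 4 → E3) (hl : ∀ j, ‖l j‖ = 1)
    (hij : ∀ j k, j ≠ k → ⟪l j, l k⟫ = -(1 / 3)) (θ : ℝ) (hc : 1 / 3 < cos θ)
    (i j k : Fin 4) (h1 : i ≠ j) (h2 : j ≠ k) (h3 : i ≠ k) :
    closedCap (l i) θ ∩ closedCap (l j) θ ∩ closedCap (l k) θ = ∅ := by
  ext y
  simp only [closedCap, mem_inter_iff, mem_ofPred_eq, mem_empty_iff_false, iff_false]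
  rintro ⟨⟨hi, hj⟩, hk⟩
  have hy : ‖(y : E3)‖ = 1 := by simp
  have hs : ‖l i + l j + l k‖ = 1 := by
    rw [← sq_eq_sq₀ (norm_nonneg _) zero_le_one, ← real_inner_self_eq_norm_sq]
    simp only [inner_add_left, inner_add_right, hij i j h1, hij j i h1.symm, hij j k h2,
      hij k j h2.symm, hij i k h3, hij k i h3.symm, real_inner_self_eq_norm_sq, hl]
    norm_num
  have := (abs_le.1 (abs_real_inner_le_norm (l i + l j + l k) (y : E3))).2
  rw [hs, hy, inner_add_left, inner_add_left] at this
  linarith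

/-- Let `l₁, …, l₄` be the vertices of a regular tetrahedron inscribed in the unit
sphere, and for `θ ∈ (0, π/2]` let `C_θ = ⋃ⱼ C[lⱼ, θ]`. If
`(1/2)·arccos(−1/3) ≤ θ < arccos(1/3)`, then `σ(C_θ) = 2(1 − cos θ) − 6·A_θ`. -/
theorem measure_union_caps_middle_radius
    (l : Fin 4 → EuclideanSpace ℝ (Fin 3))
    (hl : ∀ j, ‖l j‖ = 1)
    (hij : ∀ j k, j ≠ k → ⟪l j, l k⟫ = -(1 / 3))
    (θ : ℝ) (hθ₀ : 0 < θ) (hθπ : θ ≤ Real.pi / 2)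
    (hθ₁ : Real.arccos (-(1 / 3)) / 2 ≤ θ) (hθ₂ : θ < Real.arccos (1 / 3)) :
    sphereProb (⋃ j, closedCap (l j) θ) =
      ENNReal.ofReal (2 * (1 - Real.cos θ) - 6 * luneArea θ) := by
  have hpi := pi_pos
  have hc1 : 1 / 3 < cos θ := by
    have := cos_lt_cos_of_nonneg_of_le_pi hθ₀.le (arccos_le_pi _) hθ₂
    rwa [cos_arccos (by norm_num) (by norm_num)] at this
  have hc2 : cos θ ^ 2 ≤ 1 / 3 := by
    have := cos_le_cos_of_nonneg_of_le_pi (arccos_nonneg (-(1 / 3))) (show 2 * θ ≤ π by linarith)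
      (show arccos (-(1 / 3)) ≤ 2 * θ by linarith)
    rw [cos_arccos (by norm_num) (by norm_num), cos_two_mul] at this
    linarith
  have hcap : ∀ i, (volume : Measure E3).toSphere.real (closedCap (l i) θ) = 2 * π * (1 - cos θ) := by
    intro i
    rw [measureReal_def, toSphere_cap (l i) (hl i) hθ₀ (by linarith), ENNReal.toReal_ofReal]
    have := cos_le_one θ
    exact mul_nonneg (by positivity) (by linarith)
  have hlune : ∀ i j, i ≠ j → (volume : Measure E3).toSphere.real
      (closedCap (l i) θ ∩ closedCap (l j) θ) = 4 * π * luneArea θ := by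
    intro i j h
    have := toSphere_lune (l i) (l j) (hl i) (hl j) (hij i j h) hθ₀ hθπ hc2
    rw [measureReal_def, this.1, ENNReal.toReal_ofReal]
    exact mul_nonneg (by positivity) this.2
  have hU := union_four (volume : Measure E3).toSphere (fun i => closedCap (l i) θ)
    (fun i => measurableSet_cap _ _) (no_triple l hl hij θ hc1) _ _ hcap hlune
  rw [sphereProb, Measure.smul_apply, smul_eq_mul, toSphere_univ, ← ofReal_measureReal, hU,
    ← ENNReal.ofReal_inv_of_pos (by positivity), ← ENNReal.ofReal_mul (by positivity)]
  congr 1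
  field_simp


end
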